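/- Let σ ≥ 0, m > 0, and let ν be a σ-finite Borel measure on ℝ concentrated on (−∞,0) with ∫_{(−∞,0)} min(z², |z|) ν(dz) < ∞. Assume: (a) either σ > 0 or liminf_{x ↓ 0} x^{s−2} ∫_{(−x,0)} z² ν(dz) > 0 for some s ∈ (0,2); (b) there exists λ₋ < 0 such that ∫_{(−∞,−1)} e^{λz} ν(dz) < ∞ for all λ ∈ (λ₋, 0); and (c) the function Ψ(λ) := σ²λ²/2 + mλ + ∫_{(−∞,0)} (e^{λz} − 1 − λz) ν(dz) satisfies Ψ'(λ₀) < 0 for some λ₀ ∈ (λ₋, 0), so that there is a unique λ_* ∈ (λ₋, 0) with Ψ'(λ_*) = 0. Set d² := σ² + ∫_{(−∞,0)} z² e^{λ_* z} ν(dz) and, for λ ∈ ℝ, Ψ(iλ) := −σ²λ²/2 + imλ + ∫_{(−∞,0)} (e^{iλz} − 1 − iλz) ν(dz). Then for every b ∈ ℝ, the Fourier-inversion density p(t,b) := (1/(2π)) ∫_ℝ e^{−ibλ} exp(tΨ(iλ)) dλ is well defined for all sufficiently large t and satisfies p(t,b) · √(2π d² t) · e^{λ_* b − Ψ(λ_*)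 t} → 1 as t → ∞. -/

import Mathlib

open Filter MeasureTheory Set

/-- The Laplace (cumulant) exponent `Ψ(λ)` of a spectrally negative Lévy process with
Gaussian coefficient `σ`, drift `m` and Lévy measure `ν`. -/
noncomputable def cumulant (σ m : ℝ) (ν : MeasureTheory.Measure ℝ) (lam : ℝ) : ℝ :=
  σ ^ 2 * lam ^ 2 / 2 + m * lam +
    ∫ z in Iio (0 : ℝ), (Real.exp (lam * z) - 1 - lam * z) ∂ν

/-- The characteristic exponent `Ψ(iλ)` of the same process. -/
noncomputable def charExponent (σ m : ℝ) (ν : MeasureTheory.Measure ℝ) (lam : ℝ) : ℂ :=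
  ((-(σ ^ 2 * lam ^ 2) / 2 : ℝ) : ℂ) + Complex.I * m * lam +
    ∫ z in Iio (0 : ℝ),
      (Complex.exp (Complex.I * lam * z) - 1 - Complex.I * lam * z) ∂ν

/-- The Fourier-inversion density of `X_t` at `b`. -/
noncomputable def fourierDensity (σ m : ℝ) (ν : MeasureTheory.Measure ℝ) (t b : ℝ) : ℂ :=
  ((1 / (2 * Real.pi) : ℝ) : ℂ) *
    ∫ lam : ℝ, Complex.exp (-(Complex.I) * b * lam) *
      Complex.exp ((t : ℂ) * charExponent σ m ν lam)

/-!
Tilting `ν` to `e^{az} ν(dz)` translates the cumulant: `Ψ(a + iu) = Ψ(a) + Ψ_a(iu)`, where `Ψ_a` is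
the exponent of the tilted process, with drift `Ψ'(a)`. Moving the Fourier-inversion contour from
the imaginary axis to `Re w = a` therefore writes `p(t, b)` as `e^{Ψ(a)t - ab}` times the density of
the tilted process. At `a = λ_*` the tilted drift vanishes, so `Ψ_a(iu) ~ -d² u² / 2` at the origin,
and the substitution `u = v / √t` turns the inversion integral into a Gaussian one.

Both the contour shift and the passage to the limit need a uniform bound on `|e^{tΨ_a(iu)}|`. It
comes from `-Re Ψ(iu) ≥ c min(u², |u|^s)`, which is what condition (a) provides; it carries over to
`Ψ_a` with the same constants for every `a ≤ 0`, since then `e^{az} ≥ 1` on the negative half-line.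
-/

open scoped Topology

section ExponentialBounds

theorem norm_cexp_sub_one_le_exp_mul {u : ℂ} {M : ℝ} (hM : 0 ≤ M) (hu : u.re ≤ M) :
    ‖Complex.exp u - 1‖ ≤ Real.exp M * ‖u‖ := by
  have := (convex_halfSpace_re_le M).norm_image_sub_le_of_norm_hasDerivWithin_le
    (f := Complex.exp) (f' := Complex.exp) (C := Real.exp M) (x := 0) (y := u)
    (fun x _ ↦ (Complex.hasDerivAt_exp x).hasDerivWithinAt)
    (fun x hx ↦ by rw [Complex.norm_exp]; exact Real.exp_le_exp.2 hx) (by simpa using hM) hu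
  simpa using this

theorem norm_cexp_sub_one_sub_le_exp_mul_sq {u : ℂ} {M : ℝ} (hM : 0 ≤ M) (hu : u.re ≤ M) :
    ‖Complex.exp u - 1 - u‖ ≤ Real.exp M * ‖u‖ ^ 2 := by
  have hconv : Convex ℝ ({v : ℂ | v.re ≤ M} ∩ Metric.closedBall 0 ‖u‖) :=
    (convex_halfSpace_re_le M).inter (convex_closedBall _ _)
  have hderiv : ∀ v ∈ {v : ℂ | v.re ≤ M} ∩ Metric.closedBall 0 ‖u‖,
      ‖Complex.exp v - 1‖ ≤ Real.exp M * ‖u‖ := fun v hv ↦ by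
    have hvu : ‖v‖ ≤ ‖u‖ := by simpa using hv.2
    exact (norm_cexp_sub_one_le_exp_mul hM hv.1).trans (by gcongr)
  have := hconv.norm_image_sub_le_of_norm_hasDerivWithin_le
    (f := fun v ↦ Complex.exp v - 1 - v) (x := 0) (y := u)
    (fun v _ ↦ (((Complex.hasDerivAt_exp v).sub_const 1).sub (hasDerivAt_id v)).hasDerivWithinAt)
    hderiv (by simpa using hM) ⟨hu, by simp⟩
  simpa [pow_two, mul_assoc] using this

theorem norm_cexp_ofReal_mul_le {w : ℂ} {c r t : ℝ} (ht : 0 ≤ t) (hw : w.re ≤ -(c * r)) :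
    ‖Complex.exp (t * w)‖ ≤ Real.exp (-(t * c * r)) := by
  rw [Complex.norm_exp, Complex.re_ofReal_mul, mul_assoc, ← mul_neg]
  gcongr

variable {w : ℂ} {L z : ℝ}

theorem norm_cexp_mul_sub_one_sub_le (hz : z ≤ 0) (hL : L ≤ 0) (hw : L ≤ w.re) :
    ‖Complex.exp (w * z) - 1 - w * z‖ ≤ ‖w‖ ^ 2 * (z ^ 2 * Real.exp (L * z)) := by
  have hre : (w * z).re ≤ L * z := by simpa using mul_le_mul_of_nonpos_right hw hz
  refine (norm_cexp_sub_one_sub_le_exp_mul_sq (mul_nonneg_of_nonpos_of_nonpos hL hz) hre).trans_eq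
    ?_
  rw [norm_mul, mul_pow, Complex.norm_real, Real.norm_eq_abs, sq_abs]
  ring

theorem norm_mul_cexp_mul_sub_one_le (hz : z ≤ 0) (hL : L ≤ 0) (hw : L ≤ w.re) :
    ‖(z : ℂ) * (Complex.exp (w * z) - 1)‖ ≤ ‖w‖ * (z ^ 2 * Real.exp (L * z)) := by
  have hre : (w * z).re ≤ L * z := by simpa using mul_le_mul_of_nonpos_right hw hz
  have hexp := norm_cexp_sub_one_le_exp_mul (mul_nonneg_of_nonpos_of_nonpos hL hz) hre
  rw [norm_mul, Complex.norm_real, Real.norm_eq_abs] at hexp ⊢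
  calc |z| * ‖Complex.exp (w * z) - 1‖
      ≤ |z| * (Real.exp (L * z) * (‖w‖ * |z|)) := by gcongr
    _ = ‖w‖ * (z ^ 2 * Real.exp (L * z)) := by rw [← sq_abs z]; ring

theorem tendsto_cexp_sub_one_sub_div_sq :
    Tendsto (fun w : ℂ ↦ (Complex.exp w - 1 - w) / w ^ 2) (𝓝[≠] 0) (𝓝 (1 / 2)) := by
  have hlittle := (Complex.exp_sub_sum_range_succ_isLittleO_pow 2).tendsto_div_nhds_zero.mono_left
    (nhdsWithin_le_nhds (s := {0}ᶜ))
  have hsum := hlittle.add_const (1 / 2)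
  rw [zero_add] at hsum
  refine hsum.congr' ?_
  filter_upwards [self_mem_nhdsWithin] with w hw
  have hw : w ≠ 0 := hw
  simp only [Finset.sum_range_succ, Finset.sum_range_zero, Nat.factorial]
  field_simp
  push_cast
  ring

end ExponentialBounds

section ComplexCumulant

/-- The cumulant `Ψ(w)` at a complex argument `w`; both `cumulant` and `charExponent` are
restrictions of it, to the real and to the imaginary axis. -/
noncomputable def complexCumulant (σ m : ℝ) (ν : Measure ℝ) (w : ℂ) : ℂ :=
  (σ : ℂ) ^ 2 * w ^ 2 / 2 + m * w + ∫ z in Iio (0 : ℝ), (Complex.exp (w * z) - 1 - w * z) ∂ν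

variable {σ m a L : ℝ} {ν : Measure ℝ} {w : ℂ}

theorem complexCumulant_ofReal (x : ℝ) :
    complexCumulant σ m ν x = (cumulant σ m ν x : ℂ) := by
  unfold complexCumulant cumulant
  push_cast
  rw [← integral_complex_ofReal]
  push_cast
  rfl

theorem charExponent_eq_complexCumulant (u : ℝ) :
    charExponent σ m ν u = complexCumulant σ m ν (Complex.I * u) := by
  unfold charExponent complexCumulant
  push_cast
  linear_combination -((σ : ℂ) ^ 2 * u ^ 2 / 2) * Complex.I_sq

theorem integrableOn_sq_mul_exp_of_le (hLa : L ≤ a)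
    (h : IntegrableOn (fun z ↦ z ^ 2 * Real.exp (L * z)) (Iio 0) ν) :
    IntegrableOn (fun z ↦ z ^ 2 * Real.exp (a * z)) (Iio 0) ν := by
  refine h.mono' (by fun_prop) ?_
  filter_upwards [ae_restrict_mem measurableSet_Iio] with z (hz : z < 0)
  rw [Real.norm_of_nonneg (by positivity)]
  gcongr ?_ * Real.exp ?_
  exact mul_le_mul_of_nonpos_right hLa hz.le

theorem integrableOn_cexp_mul_sub_one_sub (hL : L ≤ 0)
    (h : IntegrableOn (fun z ↦ z ^ 2 * Real.exp (L * z)) (Iio 0) ν) (hw : L ≤ w.re) :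
    IntegrableOn (fun z : ℝ ↦ Complex.exp (w * z) - 1 - w * z) (Iio 0) ν := by
  refine (h.const_mul (‖w‖ ^ 2)).mono' (by fun_prop) ?_
  filter_upwards [ae_restrict_mem measurableSet_Iio] with z (hz : z < 0)
  exact norm_cexp_mul_sub_one_sub_le hz.le hL hw

theorem integrableOn_mul_cexp_mul_sub_one (hL : L ≤ 0)
    (h : IntegrableOn (fun z ↦ z ^ 2 * Real.exp (L * z)) (Iio 0) ν) (hw : L ≤ w.re) :
    IntegrableOn (fun z : ℝ ↦ (z : ℂ) * (Complex.exp (w * z) - 1)) (Iio 0) ν := by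
  refine (h.const_mul ‖w‖).mono' (by fun_prop) ?_
  filter_upwards [ae_restrict_mem measurableSet_Iio] with z (hz : z < 0)
  exact norm_mul_cexp_mul_sub_one_le hz.le hL hw

theorem hasDerivAt_integral_cexp_mul_sub_one_sub (hL : L ≤ 0)
    (h : IntegrableOn (fun z ↦ z ^ 2 * Real.exp (L * z)) (Iio 0) ν) (hw : L < w.re) :
    HasDerivAt (fun v : ℂ ↦ ∫ z in Iio (0 : ℝ), (Complex.exp (v * z) - 1 - v * z) ∂ν)
      (∫ z in Iio (0 : ℝ), (z : ℂ) * (Complex.exp (w * z) - 1) ∂ν) w := by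
  have hopen : IsOpen ({v : ℂ | L < v.re} ∩ Metric.ball 0 (‖w‖ + 1)) :=
    (isOpen_lt continuous_const Complex.continuous_re).inter Metric.isOpen_ball
  refine (hasDerivAt_integral_of_dominated_loc_of_deriv_le (μ := ν.restrict (Iio 0))
    (F := fun (v : ℂ) (z : ℝ) ↦ Complex.exp (v * z) - 1 - v * z)
    (F' := fun (v : ℂ) (z : ℝ) ↦ (z : ℂ) * (Complex.exp (v * z) - 1))
    (bound := fun z ↦ (‖w‖ + 1) * (z ^ 2 * Real.exp (L * z)))
    (hopen.mem_nhds (x := w) ⟨hw, by simp⟩) (Eventually.of_forall fun v ↦ by fun_prop)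
    (integrableOn_cexp_mul_sub_one_sub hL h hw.le) (by fun_prop) ?_ (h.const_mul _) ?_).2
  · filter_upwards [ae_restrict_mem measurableSet_Iio] with z (hz : z < 0) v hv
    have hvw : ‖v‖ ≤ ‖w‖ + 1 := by simpa using (Metric.mem_ball.1 hv.2).le
    exact (norm_mul_cexp_mul_sub_one_le hz.le hL (le_of_lt hv.1)).trans (by gcongr)
  · refine Eventually.of_forall fun z v _ ↦ ?_
    have hlin : HasDerivAt (fun v : ℂ ↦ v * (z : ℂ)) z v := by
      simpa using (hasDerivAt_id v).mul_const (z : ℂ)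
    exact ((hlin.cexp.sub_const 1).sub hlin).congr_deriv (by ring)

theorem hasDerivAt_complexCumulant (hL : L ≤ 0)
    (h : IntegrableOn (fun z ↦ z ^ 2 * Real.exp (L * z)) (Iio 0) ν) (hw : L < w.re) :
    HasDerivAt (complexCumulant σ m ν) ((σ : ℂ) ^ 2 * w + m +
      ∫ z in Iio (0 : ℝ), (z : ℂ) * (Complex.exp (w * z) - 1) ∂ν) w := by
  have hpoly : HasDerivAt (fun v : ℂ ↦ (σ : ℂ) ^ 2 * v ^ 2 / 2 + m * v) ((σ : ℂ) ^ 2 * w + m) w :=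
    (((((hasDerivAt_id w).pow 2).const_mul ((σ : ℂ) ^ 2)).div_const 2).add
      ((hasDerivAt_id w).const_mul (m : ℂ))).congr_deriv (by simp; ring)
  exact hpoly.add (hasDerivAt_integral_cexp_mul_sub_one_sub hL h hw)

end ComplexCumulant

section EsscherTransform

/-- The Lévy measure `e^{az} ν(dz)` of the Esscher transform with parameter `a` of a process with
Lévy measure `ν`. It is a plain density, not normalised, since `ν` may be infinite. -/
noncomputable def esscherMeasure (a : ℝ) (ν : Measure ℝ) : Measure ℝ :=
  ν.withDensity fun z ↦ ENNReal.ofReal (Real.exp (a * z))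

/-- The drift of the Esscher transform with parameter `a`. It equals `Ψ'(a)`, but the integral
formula makes sense under a weaker moment condition than differentiability at `a`. -/
noncomputable def esscherDrift (σ m : ℝ) (ν : Measure ℝ) (a : ℝ) : ℝ :=
  σ ^ 2 * a + m + ∫ z in Iio (0 : ℝ), z * (Real.exp (a * z) - 1) ∂ν

variable {σ m m' a L : ℝ} {ν : Measure ℝ}

theorem setIntegral_esscherMeasure {E : Type*} [NormedAddCommGroup E] [NormedSpace ℝ E]
    {s : Set ℝ} (hs : MeasurableSet s) (g : ℝ → E) :
    ∫ z in s, g z ∂esscherMeasure a ν = ∫ z in s, Real.exp (a * z) • g z ∂ν := by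
  unfold esscherMeasure
  rw [setIntegral_withDensity_eq_setIntegral_toReal_smul (by fun_prop) (by simp) g hs]
  simp only [ENNReal.toReal_ofReal (Real.exp_pos _).le]

theorem integrableOn_esscherMeasure_iff {E : Type*} [NormedAddCommGroup E] [NormedSpace ℝ E]
    {s : Set ℝ} (hs : MeasurableSet s) {g : ℝ → E} :
    IntegrableOn g s (esscherMeasure a ν) ↔
      IntegrableOn (fun z ↦ Real.exp (a * z) • g z) s ν := by
  unfold IntegrableOn esscherMeasure
  rw [restrict_withDensity hs, integrable_withDensity_iff_integrable_smul' (by fun_prop) (by simp)]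
  simp only [ENNReal.toReal_ofReal (Real.exp_pos _).le]

theorem integrableOn_sq_esscherMeasure_iff :
    IntegrableOn (fun z ↦ z ^ 2) (Iio 0) (esscherMeasure a ν) ↔
      IntegrableOn (fun z ↦ z ^ 2 * Real.exp (a * z)) (Iio 0) ν := by
  simp only [integrableOn_esscherMeasure_iff measurableSet_Iio, smul_eq_mul, mul_comm]

theorem setIntegral_sq_esscherMeasure :
    ∫ z in Iio (0 : ℝ), z ^ 2 ∂esscherMeasure a ν =
      ∫ z in Iio (0 : ℝ), z ^ 2 * Real.exp (a * z) ∂ν := by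
  simp only [setIntegral_esscherMeasure measurableSet_Iio, smul_eq_mul, mul_comm]

theorem esscherDrift_ofReal :
    (esscherDrift σ m ν a : ℂ) = (σ : ℂ) ^ 2 * a + m +
      ∫ z in Iio (0 : ℝ), (z : ℂ) * (Complex.exp (a * z) - 1) ∂ν := by
  unfold esscherDrift
  push_cast
  rw [← integral_complex_ofReal]
  push_cast
  rfl

theorem hasDerivAt_cumulant (hL : L ≤ 0)
    (h : IntegrableOn (fun z ↦ z ^ 2 * Real.exp (L * z)) (Iio 0) ν) (hLa : L < a) :
    HasDerivAt (cumulant σ m ν) (esscherDrift σ m ν a) a := by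
  have hd := (hasDerivAt_complexCumulant (σ := σ) (m := m) (w := a) hL h hLa).real_of_complex
  simpa only [complexCumulant_ofReal, ← esscherDrift_ofReal, Complex.ofReal_re] using hd

theorem integrableOn_cexp_I_mul_sub_one_sub (h : IntegrableOn (fun z ↦ z ^ 2) (Iio 0) ν) (u : ℝ) :
    IntegrableOn (fun z : ℝ ↦ Complex.exp (Complex.I * u * z) - 1 - Complex.I * u * z)
      (Iio 0) ν :=
  integrableOn_cexp_mul_sub_one_sub le_rfl (by simpa using h) (by simp)

theorem complexCumulant_add_mul_I (ha : a ≤ 0)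
    (h : IntegrableOn (fun z ↦ z ^ 2 * Real.exp (a * z)) (Iio 0) ν) (u : ℝ) :
    complexCumulant σ m ν (a + u * Complex.I) = cumulant σ m ν a +
      charExponent σ (esscherDrift σ m ν a) (esscherMeasure a ν) u := by
  have hreal := integrableOn_cexp_mul_sub_one_sub (w := a) ha h le_rfl
  have hdrift :=
    (integrableOn_mul_cexp_mul_sub_one (w := a) ha h le_rfl).const_mul (u * Complex.I)
  have htilt := (integrableOn_esscherMeasure_iff measurableSet_Iio).1
    (integrableOn_cexp_I_mul_sub_one_sub (integrableOn_sq_esscherMeasure_iff.2 h) u)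
  have hsum : IntegrableOn (fun z : ℝ ↦ Complex.exp (a * z) - 1 - a * z +
      u * Complex.I * (z * (Complex.exp (a * z) - 1))) (Iio 0) ν := hreal.add hdrift
  have hsplit : ∫ z in Iio (0 : ℝ),
      (Complex.exp ((a + u * Complex.I) * z) - 1 - (a + u * Complex.I) * z) ∂ν =
      (∫ z in Iio (0 : ℝ), (Complex.exp (a * z) - 1 - a * z) ∂ν) +
      u * Complex.I * (∫ z in Iio (0 : ℝ), (z : ℂ) * (Complex.exp (a * z) - 1) ∂ν) +
      ∫ z in Iio (0 : ℝ), Real.exp (a * z) •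
        (Complex.exp (Complex.I * u * z) - 1 - Complex.I * u * z) ∂ν := by
    rw [← integral_const_mul, ← integral_add hreal hdrift, ← integral_add hsum htilt]
    refine integral_congr_ae (Eventually.of_forall fun z ↦ ?_)
    simp only [Complex.real_smul, Complex.ofReal_exp, Complex.ofReal_mul]
    rw [show (a + u * Complex.I : ℂ) * z = a * z + Complex.I * u * z by ring, Complex.exp_add]
    ring
  rw [← complexCumulant_ofReal, charExponent, esscherDrift_ofReal,
    setIntegral_esscherMeasure measurableSet_Iio]
  unfold complexCumulant
  rw [hsplit]
  push_cast
  linear_combination ((σ : ℂ) ^ 2 * u ^ 2 / 2) * Complex.I_sq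

theorem integrableOn_one_sub_cos (h : IntegrableOn (fun z ↦ z ^ 2) (Iio 0) ν) (u : ℝ) :
    IntegrableOn (fun z ↦ 1 - Real.cos (u * z)) (Iio 0) ν := by
  refine (h.const_mul (u ^ 2 / 2)).mono' (by fun_prop) (Eventually.of_forall fun z ↦ ?_)
  rw [Real.norm_of_nonneg (by simpa using Real.cos_le_one _)]
  linarith [Real.one_sub_sq_div_two_le_cos (x := u * z), mul_pow u z 2]

theorem re_charExponent (h : IntegrableOn (fun z ↦ z ^ 2) (Iio 0) ν) (u : ℝ) :
    (charExponent σ m ν u).re =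
      -(σ ^ 2 * u ^ 2 / 2 + ∫ z in Iio (0 : ℝ), (1 - Real.cos (u * z)) ∂ν) := by
  have hre : (∫ z in Iio (0 : ℝ),
      (Complex.exp (Complex.I * u * z) - 1 - Complex.I * u * z) ∂ν).re =
      -∫ z in Iio (0 : ℝ), (1 - Real.cos (u * z)) ∂ν := by
    rw [← RCLike.re_eq_complex_re, ← integral_re (integrableOn_cexp_I_mul_sub_one_sub h u),
      ← integral_neg]
    refine integral_congr_ae (Eventually.of_forall fun z ↦ ?_)
    simp [Complex.exp_re]
  rw [charExponent, Complex.add_re, Complex.add_re, Complex.ofReal_re, hre]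
  simp
  ring

theorem re_charExponent_esscherMeasure_le (ha : a ≤ 0)
    (h : IntegrableOn (fun z ↦ z ^ 2 * Real.exp (a * z)) (Iio 0) ν) (u : ℝ) :
    (charExponent σ m' (esscherMeasure a ν) u).re ≤ (charExponent σ m ν u).re := by
  have hν : IntegrableOn (fun z ↦ z ^ 2) (Iio 0) ν := by
    simpa using integrableOn_sq_mul_exp_of_le ha h
  have htilt := integrableOn_sq_esscherMeasure_iff.2 h
  rw [re_charExponent hν, re_charExponent htilt, setIntegral_esscherMeasure measurableSet_Iio]
  refine neg_le_neg (add_le_add_right ?_ _)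
  refine setIntegral_mono_on (integrableOn_one_sub_cos hν u)
    ((integrableOn_esscherMeasure_iff measurableSet_Iio).1 (integrableOn_one_sub_cos htilt u))
    measurableSet_Iio fun z (hz : z < 0) ↦ ?_
  exact le_mul_of_one_le_left (by simpa using Real.cos_le_one _)
    (Real.one_le_exp (mul_nonneg_of_nonpos_of_nonpos ha hz.le))

end EsscherTransform

section StableDecay

/-- A lower bound for the decay of the characteristic exponent of a process with at least
`s`-stable small jumps, `s ≤ 2`: it is `u ^ 2` near the origin and `|u| ^ s` at infinity. -/
noncomputable def stableRate (s u : ℝ) : ℝ := min (u ^ 2) (|u| ^ s)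

variable {k s t u : ℝ}

theorem integrable_exp_neg_mul_rpow_abs (hk : 0 < k) (hs : 0 < s) :
    Integrable fun u : ℝ ↦ Real.exp (-k * |u| ^ s) := by
  have hcont : Continuous fun u : ℝ ↦ Real.exp (-k * |u| ^ s) := by
    fun_prop (disch := exact hs.le)
  have hIoi : IntegrableOn (fun u : ℝ ↦ Real.exp (-k * |u| ^ s)) (Ioi 0) := by
    refine (integrableOn_rpow_mul_exp_neg_mul_rpow (s := 0) (by norm_num) hs hk).congr_fun
      (fun u (hu : 0 < u) ↦ ?_) measurableSet_Ioi
    simp [abs_of_pos hu]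
  exact hcont.locallyIntegrable.integrable_of_isBigO_atTop_of_norm_isNegInvariant
    (Eventually.of_forall fun u ↦ by simp) (Asymptotics.isBigO_refl _ _)
    ⟨Ioi 0, Ioi_mem_atTop 0, hIoi⟩

theorem integrable_exp_neg_mul_stableRate (hk : 0 < k) (hs : 0 < s) :
    Integrable fun u ↦ Real.exp (-(k * stableRate s u)) := by
  unfold stableRate
  refine ((integrable_exp_neg_mul_sq hk).add (integrable_exp_neg_mul_rpow_abs hk hs)).mono'
    (Measurable.aestronglyMeasurable (by fun_prop)) (Eventually.of_forall fun u ↦ ?_)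
  rw [Real.norm_of_nonneg (Real.exp_pos _).le, Pi.add_apply]
  rcases min_choice (u ^ 2) (|u| ^ s) with h | h <;> rw [h, ← neg_mul]
  · exact le_add_of_nonneg_right (Real.exp_pos _).le
  · exact le_add_of_nonneg_left (Real.exp_pos _).le

theorem tendsto_stableRate_cocompact (hs : 0 < s) :
    Tendsto (stableRate s) (cocompact ℝ) atTop := by
  have habs : Tendsto (fun u : ℝ ↦ |u|) (cocompact ℝ) atTop := tendsto_norm_cocompact_atTop
  have hsq : Tendsto (fun u : ℝ ↦ u ^ 2) (cocompact ℝ) atTop := by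
    simpa only [Function.comp_def, sq_abs] using (tendsto_pow_atTop two_ne_zero).comp habs
  exact tendsto_inf_atTop _ hsq ((tendsto_rpow_atTop hs).comp habs)

theorem tendsto_exp_neg_mul_stableRate_cocompact (hk : 0 < k) (hs : 0 < s) :
    Tendsto (fun u ↦ Real.exp (-(k * stableRate s u))) (cocompact ℝ) (𝓝 0) :=
  Real.tendsto_exp_neg_atTop_nhds_zero.comp ((tendsto_stableRate_cocompact hs).const_mul_atTop hk)

theorem stableRate_le_mul_stableRate_div_sqrt (hs : s ≤ 2) (ht : 1 ≤ t) :
    stableRate s u ≤ t * stableRate s (u / √t) := by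
  have ht0 : 0 < t := by linarith
  have hsqrt : √t ^ s ≤ t := by
    calc √t ^ s ≤ √t ^ (2 : ℝ) := Real.rpow_le_rpow_of_exponent_le (Real.one_le_sqrt.2 ht) hs
      _ = t := by rw [Real.rpow_two, Real.sq_sqrt ht0.le]
  unfold stableRate
  rw [mul_min_of_nonneg _ _ ht0.le]
  refine min_le_min ?_ ?_
  · rw [div_pow, Real.sq_sqrt ht0.le, mul_div_cancel₀ _ ht0.ne']
  · rw [abs_div, abs_of_nonneg (Real.sqrt_nonneg t), Real.div_rpow (abs_nonneg _) (by positivity),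
      mul_div_assoc', le_div_iff₀ (by positivity), mul_comm t]
    gcongr

end StableDecay

section SmallJumps

variable {σ m a s u x L : ℝ} {ν : Measure ℝ}

theorem integrableOn_sq_mul_exp_Iio (hLa : L < a)
    (h : IntegrableOn (fun z ↦ Real.exp (L * z)) (Iio x) ν) (hx : x ≤ 0) :
    IntegrableOn (fun z ↦ z ^ 2 * Real.exp (a * z)) (Iio x) ν := by
  refine (h.const_mul (2 / (a - L) ^ 2)).mono' (by fun_prop) ?_
  filter_upwards [ae_restrict_mem measurableSet_Iio] with z (hz : z < x)
  have ha : 0 < a - L := sub_pos.2 hLa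
  have hy : 0 ≤ -((a - L) * z) := by
    have := mul_nonpos_of_nonneg_of_nonpos ha.le (hz.le.trans hx)
    linarith
  have hsq : ((a - L) * z) ^ 2 ≤ 2 * Real.exp (-((a - L) * z)) := by
    linarith [Real.quadratic_le_exp_of_nonneg hy, neg_sq ((a - L) * z)]
  rw [Real.norm_of_nonneg (by positivity), div_mul_eq_mul_div, le_div_iff₀ (by positivity)]
  calc z ^ 2 * Real.exp (a * z) * (a - L) ^ 2
      = ((a - L) * z) ^ 2 * Real.exp (a * z) := by ring
    _ ≤ 2 * Real.exp (-((a - L) * z)) * Real.exp (a * z) := by gcongr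
    _ = 2 * Real.exp (L * z) := by rw [mul_assoc, ← Real.exp_add]; ring_nf

theorem integrableOn_sq_mul_exp_Ico (h : IntegrableOn (fun z ↦ min (z ^ 2) |z|) (Ico (-1) 0) ν) :
    IntegrableOn (fun z ↦ z ^ 2 * Real.exp (a * z)) (Ico (-1) 0) ν := by
  refine (h.const_mul (Real.exp |a|)).mono' (by fun_prop) ?_
  filter_upwards [ae_restrict_mem measurableSet_Ico] with z hz
  have hz1 : |z| ≤ 1 := abs_le.2 ⟨hz.1, hz.2.le.trans zero_le_one⟩
  have hmin : min (z ^ 2) |z| = z ^ 2 := by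
    rw [min_eq_left]
    nlinarith [abs_nonneg z, sq_abs z]
  have haz : a * z ≤ |a| := (le_abs_self _).trans <| by
    rw [abs_mul]
    exact mul_le_of_le_one_right (abs_nonneg a) hz1
  rw [Real.norm_of_nonneg (by positivity), hmin, mul_comm]
  gcongr

theorem integrableOn_sq_mul_exp (hLa : L < a)
    (hnear : ∫⁻ z, ENNReal.ofReal (min (z ^ 2) |z|) ∂ν ≠ ⊤)
    (hfar : ∫⁻ z in Iio (-1 : ℝ), ENNReal.ofReal (Real.exp (L * z)) ∂ν ≠ ⊤) :
    IntegrableOn (fun z ↦ z ^ 2 * Real.exp (a * z)) (Iio 0) ν := by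
  rw [lintegral_ofReal_ne_top_iff_integrable (by fun_prop)
    (Eventually.of_forall fun z ↦ by positivity)] at hnear hfar
  rw [← Iio_union_Ico_eq_Iio (a := (-1 : ℝ)) (by norm_num)]
  exact (integrableOn_sq_mul_exp_Iio hLa hfar (by norm_num)).union
    (integrableOn_sq_mul_exp_Ico hnear.integrableOn)

theorem mul_setIntegral_sq_le_integral_one_sub_cos (h : IntegrableOn (fun z ↦ z ^ 2) (Iio 0) ν)
    (hx : |u| * x ≤ Real.pi) :
    2 / Real.pi ^ 2 * u ^ 2 * ∫ z in Ioo (-x) 0, z ^ 2 ∂ν ≤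
      ∫ z in Iio (0 : ℝ), (1 - Real.cos (u * z)) ∂ν := by
  calc 2 / Real.pi ^ 2 * u ^ 2 * ∫ z in Ioo (-x) 0, z ^ 2 ∂ν
      = ∫ z in Ioo (-x) 0, 2 / Real.pi ^ 2 * u ^ 2 * z ^ 2 ∂ν := (integral_const_mul _ _).symm
    _ ≤ ∫ z in Ioo (-x) 0, (1 - Real.cos (u * z)) ∂ν := by
      refine setIntegral_mono_on ((h.mono_set Ioo_subset_Iio_self).const_mul _)
        ((integrableOn_one_sub_cos h u).mono_set Ioo_subset_Iio_self) measurableSet_Ioo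
        fun z hz ↦ ?_
      have huz : |u * z| ≤ Real.pi := by
        rw [abs_mul, abs_of_neg hz.2]
        exact (mul_le_mul_of_nonneg_left (by linarith [hz.1]) (abs_nonneg u)).trans hx
      linarith [Real.cos_le_one_sub_mul_cos_sq huz, mul_pow u z 2]
    _ ≤ ∫ z in Iio 0, (1 - Real.cos (u * z)) ∂ν :=
      setIntegral_mono_set (integrableOn_one_sub_cos h u)
        (Eventually.of_forall fun z ↦ by simpa using Real.cos_le_one _)
        Ioo_subset_Iio_self.eventuallyLE

theorem exists_mul_rpow_le_setIntegral_sq (h : 0 < liminf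
      (fun x ↦ x ^ (s - 2) * (∫⁻ z in Ioo (-x) (0 : ℝ), ENNReal.ofReal (z ^ 2) ∂ν).toReal)
      (𝓝[>] 0)) :
    ∃ κ > 0, ∃ x₀ > 0, ∀ x ∈ Ioc 0 x₀, κ * x ^ (2 - s) ≤ ∫ z in Ioo (-x) 0, z ^ 2 ∂ν := by
  obtain ⟨κ, hκ, hlt⟩ := exists_between h
  have hnonneg : ∀ᶠ x : ℝ in 𝓝[>] 0, 0 ≤ x ^ (s - 2) *
      (∫⁻ z in Ioo (-x) (0 : ℝ), ENNReal.ofReal (z ^ 2) ∂ν).toReal := by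
    filter_upwards [self_mem_nhdsWithin] with x (hx : 0 < x)
    positivity
  obtain ⟨x₀, hx₀, hsub⟩ := mem_nhdsGT_iff_exists_Ioc_subset.1
    (eventually_lt_of_lt_liminf hlt (isBoundedUnder_of_eventually_ge hnonneg))
  refine ⟨κ, hκ, x₀, hx₀, fun x hx ↦ ?_⟩
  have hκx : κ < x ^ (s - 2) * (∫⁻ z in Ioo (-x) (0 : ℝ), ENNReal.ofReal (z ^ 2) ∂ν).toReal :=
    hsub hx
  rw [← integral_eq_lintegral_of_nonneg_ae (Eventually.of_forall fun z ↦ by positivity)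
    (by fun_prop), ← neg_sub 2 s, Real.rpow_neg hx.1.le, inv_mul_eq_div,
    lt_div_iff₀ (Real.rpow_pos_of_pos hx.1 _)] at hκx
  exact hκx.le

-- On the window `(-x, 0)` with `x = min (1 / |u|) x₀` one has `1 - cos (u z) ≳ (u z)²`.
theorem exists_mul_stableRate_le_integral_one_sub_cos (hs : 0 < s)
    (h : IntegrableOn (fun z ↦ z ^ 2) (Iio 0) ν)
    (hliminf : 0 < liminf
      (fun x ↦ x ^ (s - 2) * (∫⁻ z in Ioo (-x) (0 : ℝ), ENNReal.ofReal (z ^ 2) ∂ν).toReal)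
      (𝓝[>] 0)) :
    ∃ c > 0, ∀ u, c * stableRate s u ≤ ∫ z in Iio (0 : ℝ), (1 - Real.cos (u * z)) ∂ν := by
  obtain ⟨κ, hκ, x₀, hx₀, hκx⟩ := exists_mul_rpow_le_setIntegral_sq hliminf
  have hwindow : ∀ u, ∀ x ∈ Ioc 0 x₀, |u| * x ≤ 1 →
      2 / Real.pi ^ 2 * u ^ 2 * (κ * x ^ (2 - s)) ≤
        ∫ z in Iio (0 : ℝ), (1 - Real.cos (u * z)) ∂ν := fun u x hx hux ↦
    (mul_le_mul_of_nonneg_left (hκx x hx) (by positivity)).trans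
      (mul_setIntegral_sq_le_integral_one_sub_cos h (hux.trans (by linarith [Real.pi_gt_three])))
  refine ⟨2 / Real.pi ^ 2 * κ * min 1 (x₀ ^ (2 - s)), by positivity, fun u ↦ ?_⟩
  rcases eq_or_ne u 0 with rfl | hu
  · simp [stableRate, Real.zero_rpow hs.ne']
  have hu : 0 < |u| := abs_pos.2 hu
  unfold stableRate
  rcases le_total |u|⁻¹ x₀ with hux | hux
  · calc 2 / Real.pi ^ 2 * κ * min 1 (x₀ ^ (2 - s)) * min (u ^ 2) (|u| ^ s)
        ≤ 2 / Real.pi ^ 2 * κ * 1 * |u| ^ s := by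
          gcongr
          exacts [min_le_left _ _, min_le_right _ _]
      _ = 2 / Real.pi ^ 2 * u ^ 2 * (κ * |u|⁻¹ ^ (2 - s)) := by
          rw [Real.inv_rpow hu.le, Real.rpow_sub hu, Real.rpow_two, sq_abs]
          field_simp
      _ ≤ _ := hwindow u _ ⟨by positivity, hux⟩ (mul_inv_cancel₀ hu.ne').le
  · calc 2 / Real.pi ^ 2 * κ * min 1 (x₀ ^ (2 - s)) * min (u ^ 2) (|u| ^ s)
        ≤ 2 / Real.pi ^ 2 * κ * x₀ ^ (2 - s) * u ^ 2 := by
          gcongr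
          exacts [min_le_right _ _, min_le_left _ _]
      _ = 2 / Real.pi ^ 2 * u ^ 2 * (κ * x₀ ^ (2 - s)) := by ring
      _ ≤ _ := hwindow u _ ⟨hx₀, le_rfl⟩ ((le_inv_mul_iff₀ hu).1 (by simpa using hux))

theorem exists_re_charExponent_le (h : IntegrableOn (fun z ↦ z ^ 2) (Iio 0) ν)
    (hcase : 0 < σ ∨ ∃ s ∈ Ioo (0 : ℝ) 2, 0 < liminf
      (fun x ↦ x ^ (s - 2) * (∫⁻ z in Ioo (-x) (0 : ℝ), ENNReal.ofReal (z ^ 2) ∂ν).toReal)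
      (𝓝[>] 0)) :
    ∃ c > 0, ∃ s ∈ Ioc (0 : ℝ) 2, ∀ u, (charExponent σ m ν u).re ≤ -(c * stableRate s u) := by
  simp only [re_charExponent h, neg_le_neg_iff]
  rcases hcase with hσ | ⟨s, hs, hliminf⟩
  · refine ⟨σ ^ 2 / 2, by positivity, 2, by norm_num, fun u ↦ ?_⟩
    have hjump : 0 ≤ ∫ z in Iio (0 : ℝ), (1 - Real.cos (u * z)) ∂ν :=
      integral_nonneg fun z ↦ by simpa using Real.cos_le_one _
    have hrate : σ ^ 2 / 2 * stableRate 2 u ≤ σ ^ 2 / 2 * u ^ 2 := by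
      gcongr
      exact min_le_left _ _
    linarith
  · obtain ⟨c, hc, hle⟩ := exists_mul_stableRate_le_integral_one_sub_cos hs.1 h hliminf
    exact ⟨c, hc, s, Ioo_subset_Ioc_self hs,
      fun u ↦ (hle u).trans (le_add_of_nonneg_left (by positivity))⟩

end SmallJumps

section ContourShift

theorem integral_vertical_line_eq {E : Type*} [NormedAddCommGroup E] [NormedSpace ℂ E]
    {F : ℂ → E} {G : ℝ → ℝ} {a b : ℝ} (hab : a ≤ b)
    (hcont : ContinuousOn F (Complex.re ⁻¹' Icc a b))
    (hdiff : DifferentiableOn ℂ F (Complex.re ⁻¹' Ioo a b))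
    (hbound : ∀ x ∈ Icc a b, ∀ y : ℝ, ‖F (x + y * Complex.I)‖ ≤ G y)
    (hG : Integrable G) (hG0 : Tendsto G (cocompact ℝ) (𝓝 0)) :
    ∫ y : ℝ, F (a + y * Complex.I) = ∫ y : ℝ, F (b + y * Complex.I) := by
  have hline : ∀ x ∈ Icc a b, Tendsto (fun R : ℝ ↦ ∫ y in -R..R, F (x + y * Complex.I)) atTop
      (𝓝 (∫ y : ℝ, F (x + y * Complex.I))) := fun x hx ↦ by
    have hmeas : Continuous fun y : ℝ ↦ F (x + y * Complex.I) :=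
      hcont.comp_continuous (by fun_prop) fun y ↦ by simpa using hx
    exact intervalIntegral_tendsto_integral
      (hG.mono' hmeas.aestronglyMeasurable (Eventually.of_forall (hbound x hx)))
      tendsto_neg_atTop_atBot tendsto_id
  have hedge : ∀ r : ℝ → ℝ, Tendsto r atTop (cocompact ℝ) →
      Tendsto (fun R ↦ ∫ x in a..b, F (x + r R * Complex.I)) atTop (𝓝 0) := fun r hr ↦ by
    refine squeeze_zero_norm (fun R ↦ intervalIntegral.norm_integral_le_of_norm_le_const
      fun x hx ↦ hbound x (Ioc_subset_Icc_self (uIoc_of_le hab ▸ hx)) (r R)) ?_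
    simpa using (hG0.comp hr).mul_const |b - a|
  have hrect : ∀ R : ℝ, (∫ x in a..b, F (x + (-R : ℝ) * Complex.I)) -
      (∫ x in a..b, F (x + R * Complex.I)) +
      Complex.I • (∫ y in -R..R, F (b + y * Complex.I)) -
      Complex.I • ∫ y in -R..R, F (a + y * Complex.I) = 0 := fun R ↦
    Complex.integral_boundary_rect_eq_zero_of_continuousOn_of_differentiableOn F ⟨a, -R⟩ ⟨b, R⟩
      (hcont.mono fun w hw ↦ uIcc_of_le hab ▸ hw.1)
      (hdiff.mono fun w hw ↦ by simpa [hab] using hw.1)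
  have hlim := (((hedge _ (tendsto_neg_atTop_atBot.mono_right atBot_le_cocompact)).sub
    (hedge _ (tendsto_id.mono_right atTop_le_cocompact))).add
    ((hline b ⟨hab, le_rfl⟩).const_smul Complex.I)).sub
    ((hline a ⟨le_rfl, hab⟩).const_smul Complex.I)
  have hzero := tendsto_nhds_unique (hlim.congr hrect) tendsto_const_nhds
  rw [sub_zero, zero_add, ← smul_sub, smul_eq_zero_iff_right Complex.I_ne_zero] at hzero
  exact (sub_eq_zero.1 hzero).symm

variable {σ m a c s t L x : ℝ} {ν : Measure ℝ}

theorem cexp_neg_mul_add_mul_complexCumulant (hx : x ≤ 0)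
    (h : IntegrableOn (fun z ↦ z ^ 2 * Real.exp (x * z)) (Iio 0) ν) (b y : ℝ) :
    Complex.exp (-b * (x + y * Complex.I) + t * complexCumulant σ m ν (x + y * Complex.I)) =
      (Real.exp (t * cumulant σ m ν x - x * b) : ℂ) * (Complex.exp (-Complex.I * b * y) *
        Complex.exp (t * charExponent σ (esscherDrift σ m ν x) (esscherMeasure x ν) y)) := by
  rw [complexCumulant_add_mul_I hx h, Complex.ofReal_exp, ← Complex.exp_add, ← Complex.exp_add]
  push_cast
  ring_nf

theorem norm_cexp_neg_mul_add_mul_complexCumulant_le (hx : x ≤ 0)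
    (h : IntegrableOn (fun z ↦ z ^ 2 * Real.exp (x * z)) (Iio 0) ν) (ht : 0 ≤ t)
    (hre : ∀ u, (charExponent σ m ν u).re ≤ -(c * stableRate s u)) (b y : ℝ) :
    ‖Complex.exp (-b * (x + y * Complex.I) + t * complexCumulant σ m ν (x + y * Complex.I))‖ ≤
      Real.exp (t * cumulant σ m ν x - x * b) * Real.exp (-(t * c * stableRate s y)) := by
  rw [cexp_neg_mul_add_mul_complexCumulant hx h, norm_mul, norm_mul, Complex.norm_real,
    Real.norm_of_nonneg (Real.exp_pos _).le, Complex.norm_exp (-Complex.I * b * y)]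
  gcongr
  simpa using norm_cexp_ofReal_mul_le ht
    ((re_charExponent_esscherMeasure_le hx h y).trans (hre y))

theorem fourierDensity_eq_exp_mul_fourierDensity_esscherMeasure (hLa : L < a) (ha : a ≤ 0)
    (h : IntegrableOn (fun z ↦ z ^ 2 * Real.exp (L * z)) (Iio 0) ν) (hc : 0 < c) (hs : 0 < s)
    (hre : ∀ u, (charExponent σ m ν u).re ≤ -(c * stableRate s u)) (ht : 0 < t) (b : ℝ) :
    fourierDensity σ m ν t b = (Real.exp (t * cumulant σ m ν a - a * b) : ℂ) *
      fourierDensity σ (esscherDrift σ m ν a) (esscherMeasure a ν) t b := by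
  have hL : L ≤ 0 := hLa.le.trans ha
  have hmoment : ∀ x ∈ Icc a 0, IntegrableOn (fun z ↦ z ^ 2 * Real.exp (x * z)) (Iio 0) ν :=
    fun x hx ↦ integrableOn_sq_mul_exp_of_le (hLa.le.trans hx.1) h
  obtain ⟨B, hB⟩ := isCompact_Icc.exists_bound_of_continuousOn (s := Icc a 0)
    (f := fun x ↦ Real.exp (t * cumulant σ m ν x - x * b)) fun x hx ↦ by
      have := (hasDerivAt_cumulant (σ := σ) (m := m) hL h (hLa.trans_le hx.1)).continuousAt
      exact ContinuousAt.continuousWithinAt (by fun_prop)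
  have hdiff : ∀ w : ℂ, L < w.re →
      DifferentiableAt ℂ (fun w ↦ Complex.exp (-b * w + t * complexCumulant σ m ν w)) w :=
    fun w hw ↦ by
      have := (hasDerivAt_complexCumulant (σ := σ) (m := m) hL h hw).differentiableAt
      fun_prop
  have hshift := integral_vertical_line_eq ha
    (F := fun w ↦ Complex.exp (-b * w + t * complexCumulant σ m ν w))
    (fun w hw ↦ (hdiff w (hLa.trans_le hw.1)).continuousAt.continuousWithinAt)
    (fun w hw ↦ (hdiff w (hLa.trans hw.1)).differentiableWithinAt)
    (fun x hx y ↦ (norm_cexp_neg_mul_add_mul_complexCumulant_le hx.2 (hmoment x hx) ht.le hre b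
      y).trans (mul_le_mul_of_nonneg_right ((Real.le_norm_self _).trans (hB x hx))
        (Real.exp_pos _).le))
    ((integrable_exp_neg_mul_stableRate (mul_pos ht hc) hs).const_mul B)
    (by simpa using (tendsto_exp_neg_mul_stableRate_cocompact (mul_pos ht hc) hs).const_mul B)
  simp only [cexp_neg_mul_add_mul_complexCumulant ha (hmoment a ⟨le_rfl, ha⟩)] at hshift
  rw [integral_const_mul] at hshift
  unfold fourierDensity
  rw [mul_left_comm, hshift]
  congr 2 with y
  rw [charExponent_eq_complexCumulant, ← Complex.exp_add, Complex.ofReal_zero, zero_add]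
  ring_nf

theorem fourierDensity_esscherMeasure (hLa : L < a) (ha : a ≤ 0)
    (h : IntegrableOn (fun z ↦ z ^ 2 * Real.exp (L * z)) (Iio 0) ν) (hc : 0 < c) (hs : 0 < s)
    (hre : ∀ u, (charExponent σ m ν u).re ≤ -(c * stableRate s u)) (ht : 0 < t) (b : ℝ) :
    fourierDensity σ (esscherDrift σ m ν a) (esscherMeasure a ν) t b =
      fourierDensity σ m ν t b * (Real.exp (a * b - cumulant σ m ν a * t) : ℂ) := by
  have hcancel : Real.exp (t * cumulant σ m ν a - a * b) *
      Real.exp (a * b - cumulant σ m ν a * t) = 1 := by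
    rw [← Real.exp_add, Real.exp_eq_one_iff]
    ring
  rw [fourierDensity_eq_exp_mul_fourierDensity_esscherMeasure hLa ha h hc hs hre ht,
    mul_right_comm, ← Complex.ofReal_mul, hcancel, Complex.ofReal_one, one_mul]

end ContourShift

section LocalLimit

variable {σ m c s t u : ℝ} {ν : Measure ℝ}

theorem norm_cexp_I_mul_sub_one_sub_le {z : ℝ} (hz : z ≤ 0) (u : ℝ) :
    ‖Complex.exp (Complex.I * u * z) - 1 - Complex.I * u * z‖ ≤ u ^ 2 * z ^ 2 := by
  simpa using norm_cexp_mul_sub_one_sub_le (w := Complex.I * u) hz le_rfl (by simp)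

theorem continuous_charExponent (h : IntegrableOn (fun z ↦ z ^ 2) (Iio 0) ν) :
    Continuous (charExponent σ m ν) := by
  refine (by fun_prop : Continuous fun u : ℝ ↦
    ((-(σ ^ 2 * u ^ 2) / 2 : ℝ) : ℂ) + Complex.I * m * u).add
    (continuous_iff_continuousAt.2 fun u ↦ ?_)
  refine continuousAt_of_dominated (bound := fun z ↦ (|u| + 1) ^ 2 * z ^ 2)
    (Eventually.of_forall fun v ↦ by fun_prop) ?_ (h.const_mul _)
    (Eventually.of_forall fun z ↦ by fun_prop)
  filter_upwards [Metric.ball_mem_nhds u one_pos] with v hv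
  filter_upwards [ae_restrict_mem measurableSet_Iio] with z (hz : z < 0)
  have hvu : |v| ≤ |u| + 1 := by
    have := abs_sub_abs_le_abs_sub v u
    rw [Metric.mem_ball, Real.dist_eq] at hv
    linarith
  calc _ ≤ v ^ 2 * z ^ 2 := norm_cexp_I_mul_sub_one_sub_le hz.le v
    _ ≤ (|u| + 1) ^ 2 * z ^ 2 := by rw [← sq_abs v]; gcongr

theorem integrable_cexp_mul_charExponent (h : IntegrableOn (fun z ↦ z ^ 2) (Iio 0) ν) (hc : 0 < c)
    (hs : 0 < s) (hre : ∀ u, (charExponent σ m ν u).re ≤ -(c * stableRate s u)) (ht : 0 < t) :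
    Integrable fun u ↦ Complex.exp (t * charExponent σ m ν u) := by
  have hcont : Continuous fun u ↦ Complex.exp (t * charExponent σ m ν u) := by
    have := continuous_charExponent (σ := σ) (m := m) h
    fun_prop
  exact (integrable_exp_neg_mul_stableRate (mul_pos ht hc) hs).mono' hcont.aestronglyMeasurable
    (Eventually.of_forall fun u ↦ norm_cexp_ofReal_mul_le ht.le (hre u))

theorem tendsto_cexp_I_mul_sub_one_sub_div_sq (z : ℝ) :
    Tendsto (fun u : ℝ ↦ (Complex.exp (Complex.I * u * z) - 1 - Complex.I * u * z) / u ^ 2)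
      (𝓝[≠] 0) (𝓝 ((-(z ^ 2) / 2 : ℝ) : ℂ)) := by
  rcases eq_or_ne z 0 with rfl | hz
  · simp
  have hz : (z : ℂ) ≠ 0 := by exact_mod_cast hz
  have hinner : Tendsto (fun u : ℝ ↦ Complex.I * u * z) (𝓝[≠] 0) (𝓝[≠] 0) := by
    refine tendsto_nhdsWithin_iff.2 ⟨?_, ?_⟩
    · have : Continuous fun u : ℝ ↦ Complex.I * u * z := by fun_prop
      simpa using (this.tendsto 0).mono_left nhdsWithin_le_nhds
    · filter_upwards [self_mem_nhdsWithin] with u (hu : u ≠ 0)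
      simp [hu, hz]
  have hlim := (tendsto_cexp_sub_one_sub_div_sq.comp hinner).mul_const ((Complex.I * z) ^ 2)
  convert hlim using 2 with u
  · simp only [Function.comp_apply]
    field_simp
  · push_cast
    linear_combination (-(z : ℂ) ^ 2 / 2) * Complex.I_sq

theorem tendsto_charExponent_div_sq (h : IntegrableOn (fun z ↦ z ^ 2) (Iio 0) ν) :
    Tendsto (fun u : ℝ ↦ charExponent σ 0 ν u / u ^ 2) (𝓝[≠] 0)
      (𝓝 ((-((σ ^ 2 + ∫ z in Iio (0 : ℝ), z ^ 2 ∂ν) / 2) : ℝ) : ℂ)) := by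
  have hjump : Tendsto (fun u : ℝ ↦ ∫ z in Iio (0 : ℝ),
      (Complex.exp (Complex.I * u * z) - 1 - Complex.I * u * z) / u ^ 2 ∂ν) (𝓝[≠] 0)
      (𝓝 (∫ z in Iio (0 : ℝ), ((-(z ^ 2) / 2 : ℝ) : ℂ) ∂ν)) := by
    refine tendsto_integral_filter_of_dominated_convergence (fun z ↦ z ^ 2)
      (Eventually.of_forall fun u ↦ by fun_prop) ?_ h
      (Eventually.of_forall tendsto_cexp_I_mul_sub_one_sub_div_sq)
    filter_upwards [self_mem_nhdsWithin] with u (hu : u ≠ 0)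
    filter_upwards [ae_restrict_mem measurableSet_Iio] with z (hz : z < 0)
    rw [norm_div, norm_pow, Complex.norm_real, Real.norm_eq_abs, sq_abs,
      div_le_iff₀ (by positivity), mul_comm (z ^ 2)]
    exact norm_cexp_I_mul_sub_one_sub_le hz.le u
  rw [integral_complex_ofReal, integral_div, integral_neg] at hjump
  have hsum := hjump.const_add ((-(σ ^ 2) / 2 : ℝ) : ℂ)
  rw [← Complex.ofReal_add] at hsum
  convert hsum.congr' ?_ using 2
  · ring_nf
  · filter_upwards [self_mem_nhdsWithin] with u (hu : u ≠ 0)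
    rw [charExponent, integral_div]
    have hu : (u : ℂ) ≠ 0 := by exact_mod_cast hu
    push_cast
    field_simp
    ring

theorem tendsto_mul_comp_div_sqrt {f : ℝ → ℂ} {A : ℂ}
    (hf : Tendsto (fun v : ℝ ↦ f v / v ^ 2) (𝓝[≠] 0) (𝓝 A)) (hu : u ≠ 0) :
    Tendsto (fun t : ℝ ↦ t * f (u / √t)) atTop (𝓝 (A * u ^ 2)) := by
  have hinner : Tendsto (fun t : ℝ ↦ u / √t) atTop (𝓝[≠] 0) := by
    refine tendsto_nhdsWithin_iff.2 ⟨Real.tendsto_sqrt_atTop.const_div_atTop u, ?_⟩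
    filter_upwards [eventually_gt_atTop 0] with t ht
    exact div_ne_zero hu (Real.sqrt_pos.2 ht).ne'
  refine ((hf.comp hinner).mul_const ((u : ℂ) ^ 2)).congr' ?_
  filter_upwards [eventually_gt_atTop 0] with t ht
  have hsq : ((√t : ℝ) : ℂ) ^ 2 = t := by rw [← Complex.ofReal_pow, Real.sq_sqrt ht.le]
  have hu : (u : ℂ) ≠ 0 := by exact_mod_cast hu
  simp only [Function.comp_apply]
  rw [Complex.ofReal_div, div_pow, hsq]
  field_simp

theorem tendsto_sqrt_mul_integral_mul_cexp {g ψ : ℝ → ℂ} {A M : ℝ} (hg : Continuous g)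
    (hgM : ∀ v, ‖g v‖ ≤ M) (hψ : Continuous ψ) (hc : 0 < c) (hs : s ∈ Ioc (0 : ℝ) 2)
    (hre : ∀ v, (ψ v).re ≤ -(c * stableRate s v))
    (hlim : Tendsto (fun v : ℝ ↦ ψ v / v ^ 2) (𝓝[≠] 0) (𝓝 (-A : ℝ))) :
    Tendsto (fun t : ℝ ↦ (√t : ℂ) * ∫ v, g v * Complex.exp (t * ψ v)) atTop
      (𝓝 (g 0 * √(Real.pi / A))) := by
  have hgauss : ∫ u : ℝ, g 0 * Complex.exp ((-A : ℝ) * u ^ 2) = g 0 * √(Real.pi / A) := by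
    rw [integral_const_mul, ← integral_gaussian, ← integral_complex_ofReal]
    push_cast
    rfl
  have hdct : Tendsto (fun t : ℝ ↦ ∫ u : ℝ, g (u / √t) * Complex.exp (t * ψ (u / √t))) atTop
      (𝓝 (∫ u : ℝ, g 0 * Complex.exp ((-A : ℝ) * u ^ 2))) := by
    refine tendsto_integral_filter_of_dominated_convergence
      (fun u ↦ M * Real.exp (-(c * stableRate s u)))
      (Eventually.of_forall fun t ↦ Continuous.aestronglyMeasurable (by fun_prop)) ?_
      ((integrable_exp_neg_mul_stableRate hc hs.1).const_mul M) ?_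
    · filter_upwards [eventually_ge_atTop 1] with t ht
      refine Eventually.of_forall fun u ↦ ?_
      have hrate : c * stableRate s u ≤ t * c * stableRate s (u / √t) := by
        rw [mul_comm t, mul_assoc]
        exact mul_le_mul_of_nonneg_left (stableRate_le_mul_stableRate_div_sqrt hs.2 ht) hc.le
      rw [norm_mul]
      exact mul_le_mul (hgM _) ((norm_cexp_ofReal_mul_le (by linarith) (hre _)).trans
        (Real.exp_le_exp.2 (neg_le_neg hrate))) (norm_nonneg _) ((norm_nonneg _).trans (hgM 0))
    · filter_upwards [Measure.ae_ne volume 0] with u hu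
      exact ((hg.tendsto 0).comp (Real.tendsto_sqrt_atTop.const_div_atTop u)).mul
        (tendsto_mul_comp_div_sqrt hlim hu).cexp
  rw [← hgauss]
  refine hdct.congr fun t ↦ ?_
  rw [Measure.integral_comp_div (fun v ↦ g v * Complex.exp (t * ψ v)),
    abs_of_nonneg (Real.sqrt_nonneg t), Complex.real_smul]

theorem variance_pos_of_re_charExponent_le (h : IntegrableOn (fun z ↦ z ^ 2) (Iio 0) ν)
    (hc : 0 < c) (hre : ∀ u, (charExponent σ m ν u).re ≤ -(c * stableRate s u)) :
    0 < σ ^ 2 + ∫ z in Iio (0 : ℝ), z ^ 2 ∂ν := by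
  have hone := hre 1
  have hcos : ∫ z in Iio (0 : ℝ), (1 - Real.cos (1 * z)) ∂ν ≤ ∫ z in Iio (0 : ℝ), z ^ 2 / 2 ∂ν :=
    setIntegral_mono (integrableOn_one_sub_cos h 1) (h.div_const 2) fun z ↦ by
      linarith [Real.one_sub_sq_div_two_le_cos (x := 1 * z), one_mul z]
  rw [integral_div] at hcos
  simp only [re_charExponent h, stableRate, abs_one, Real.one_rpow, one_pow, min_self] at hone
  linarith

theorem tendsto_fourierDensity_mul_sqrt (h : IntegrableOn (fun z ↦ z ^ 2) (Iio 0) ν) (hc : 0 < c)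
    (hs : s ∈ Ioc (0 : ℝ) 2) (hre : ∀ u, (charExponent σ 0 ν u).re ≤ -(c * stableRate s u))
    (b : ℝ) :
    Tendsto (fun t ↦ fourierDensity σ 0 ν t b *
      (√(2 * Real.pi * (σ ^ 2 + ∫ z in Iio (0 : ℝ), z ^ 2 ∂ν) * t) : ℂ)) atTop (𝓝 1) := by
  set D := σ ^ 2 + ∫ z in Iio (0 : ℝ), z ^ 2 ∂ν
  have hD : 0 < D := variance_pos_of_re_charExponent_le h hc hre
  have hlaplace := tendsto_sqrt_mul_integral_mul_cexp
    (g := fun v : ℝ ↦ Complex.exp (-Complex.I * b * v)) (M := 1) (A := D / 2) (by fun_prop)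
    (fun v ↦ by simp [Complex.norm_exp]) (continuous_charExponent h) hc hs hre
    (tendsto_charExponent_div_sq h)
  have hconst : 1 / (2 * Real.pi) * √(2 * Real.pi * D) * √(Real.pi / (D / 2)) = 1 := by
    rw [mul_assoc, ← Real.sqrt_mul (by positivity),
      show 2 * Real.pi * D * (Real.pi / (D / 2)) = (2 * Real.pi) ^ 2 by field_simp,
      Real.sqrt_sq (by positivity), one_div_mul_cancel (by positivity)]
  convert hlaplace.const_mul ((1 / (2 * Real.pi) * √(2 * Real.pi * D) : ℝ) : ℂ) using 2 with t
  · rw [fourierDensity, Real.sqrt_mul (by positivity)]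
    push_cast
    ring
  · rw [Complex.ofReal_zero, mul_zero, Complex.exp_zero, one_mul, ← Complex.ofReal_mul, hconst,
      Complex.ofReal_one]

end LocalLimit

/-- The analytic content of Corollary 2.1 of the paper: under the Esscher transform at
the critical point `λ_*`, the Fourier-inversion density of `X_t` at `b` satisfies
`p(t,b) √(2π d² t) e^{λ_* b − Ψ(λ_*) t} → 1`, where
`d² = σ² + ∫ z² e^{λ_* z} ν(dz)`. -/
theorem density_asymptotics_esscher (σ m lamM : ℝ) (hσ : 0 ≤ σ) (hm : 0 < m)
    (ν : MeasureTheory.Measure ℝ) [SigmaFinite ν]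
    (hconc : ν (Ici (0 : ℝ)) = 0)
    (hmin : ∫⁻ z, ENNReal.ofReal (min (z ^ 2) |z|) ∂ν ≠ ⊤)
    (hcase : 0 < σ ∨ ∃ s ∈ Ioo (0 : ℝ) 2, 0 < Filter.liminf
      (fun x => x ^ (s - 2) * (∫⁻ z in Ioo (-x) (0 : ℝ), ENNReal.ofReal (z ^ 2) ∂ν).toReal)
      (nhdsWithin 0 (Ioi 0)))
    (hlamM : lamM < 0)
    (hexp : ∀ lam ∈ Ioo lamM (0 : ℝ),
      ∫⁻ z in Iio (-1 : ℝ), ENNReal.ofReal (Real.exp (lam * z)) ∂ν ≠ ⊤)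
    (hderiv : ∃ lam0 ∈ Ioo lamM (0 : ℝ), deriv (cumulant σ m ν) lam0 < 0)
    (lamStar : ℝ) (hstar : lamStar ∈ Ioo lamM (0 : ℝ))
    (hstar0 : deriv (cumulant σ m ν) lamStar = 0)
    (b : ℝ) :
    (∀ᶠ t : ℝ in atTop,
      Integrable (fun lam : ℝ => Complex.exp ((t : ℂ) * charExponent σ m ν lam))) ∧
    Tendsto (fun t : ℝ => fourierDensity σ m ν t b *
        ((Real.sqrt (2 * Real.pi *
            (σ ^ 2 + ∫ z in Iio (0 : ℝ), z ^ 2 * Real.exp (lamStar * z) ∂ν) * t) : ℝ) : ℂ) *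
        ((Real.exp (lamStar * b - cumulant σ m ν lamStar * t) : ℝ) : ℂ))
      atTop (nhds 1) := by
  obtain ⟨L', hL', hL'star⟩ := exists_between hstar.1
  obtain ⟨L, hL'L, hLstar⟩ := exists_between hL'star
  have hL : IntegrableOn (fun z ↦ z ^ 2 * Real.exp (L * z)) (Iio 0) ν :=
    integrableOn_sq_mul_exp hL'L hmin (hexp L' ⟨hL', hL'star.trans hstar.2⟩)
  have hL0 : L ≤ 0 := (hLstar.trans hstar.2).le
  have hsq : IntegrableOn (fun z ↦ z ^ 2) (Iio 0) ν := by
    simpa using integrableOn_sq_mul_exp_of_le hL0 hL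
  have hsqStar := integrableOn_sq_mul_exp_of_le hLstar.le hL
  obtain ⟨c, hc, s, hs, hre⟩ := exists_re_charExponent_le (m := m) hsq hcase
  refine ⟨(eventually_gt_atTop 0).mono fun t ↦ integrable_cexp_mul_charExponent hsq hc hs.1 hre, ?_⟩
  have hdrift : esscherDrift σ m ν lamStar = 0 :=
    (hasDerivAt_cumulant hL0 hL hLstar).deriv.symm.trans hstar0
  have hlocal := tendsto_fourierDensity_mul_sqrt (integrableOn_sq_esscherMeasure_iff.2 hsqStar) hc
    hs (fun u ↦ (re_charExponent_esscherMeasure_le hstar.2.le hsqStar u).trans (hre u)) b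
  rw [setIntegral_sq_esscherMeasure] at hlocal
  refine hlocal.congr' ?_
  filter_upwards [eventually_gt_atTop 0] with t ht
  have htilt := fourierDensity_esscherMeasure hLstar hstar.2.le hL hc hs.1 hre ht b
  rw [hdrift] at htilt
  rw [htilt, mul_right_comm]
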